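/- For each k ≥ 1, Δ_k^{(k−1)} = (−1)^{k−1}; consequently, for each l ≥ 1, the l×l matrix B with entries B_{ij} = Δ_i^{(l−j)} satisfies B_{ij} = 0 whenever i + j > l + 1, B_{k, l+1−k} = (−1)^{k−1}, and det B = 1. -/

import Mathlib

open Polynomial Matrix Finset

noncomputable section

variable {K L : Type*} [Field K] [Field L]

/-- The orthogonal-polynomial sequence: `φ₀ = 1`, `φ₁ = z - a 0`,
`φ_{i+1} = (z - a i)·φ_i - b i·φ_{i-1}` (so `φ_{-1} = 0`). -/
def phi (a b : ℤ → K) : ℕ → Polynomial K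
  | 0 => 1
  | 1 => Polynomial.X - Polynomial.C (a 0)
  | (i+2) => (Polynomial.X - Polynomial.C (a (i+1))) * phi a b (i+1)
      - Polynomial.C (b (i+1)) * phi a b i

/-- `φ` with integer index, `0` for negative index. -/
def phiZ (a b : ℤ → K) (m : ℤ) : Polynomial K :=
  if m < 0 then 0 else phi a b m.toNat

/-- Generalized Schur polynomial `S_λ(y₁,…,y_m|a,b)
  = det(φ_{λ_j+m-j}(y_i)) / ∏_{i<j}(y_i - y_j)` (indices here 0-based). -/
def genS (a b : ℤ → K) (c : K →+* L) {m : ℕ} (y : Fin m → L) (lam : Fin m → ℕ) : L :=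
  Matrix.det (Matrix.of fun i j : Fin m =>
      (phi a b (lam j + (m - 1 - (j : ℕ)))).eval₂ c (y i)) /
    ∏ i : Fin m, ∏ j ∈ Finset.Ioi i, (y i - y j)

/-- `h_i = S_{(i)}` for `i ≥ 0`, and `h_i = 0` for `i < 0`. -/
def genh (a b : ℤ → K) (c : K →+* L) {m : ℕ} (y : Fin m → L) (i : ℤ) : L :=
  if i < 0 then 0 else genS a b c y (fun j => if (j : ℕ) = 0 then i.toNat else 0)

/-- `h_i^{(0)} = h_i`, `h_i^{(r+1)} = h_{i+1}^{(r)} + a(i+m-1)h_i^{(r)} + b(i+m-1)h_{i-1}^{(r)}`. -/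
def genhr (a b : ℤ → K) (c : K →+* L) {m : ℕ} (y : Fin m → L) : ℕ → ℤ → L
  | 0, i => genh a b c y i
  | (r+1), i => genhr a b c y r (i+1) + c (a (i + m - 1)) * genhr a b c y r i
      + c (b (i + m - 1)) * genhr a b c y r (i-1)

/-- The field `F = K(x₁,…,x_n)`. -/
abbrev Fn (K : Type*) [Field K] (n : ℕ) := FractionRing (MvPolynomial (Fin n) K)

/-- The embedding `K → K(x₁,…,x_n)`. -/
def cK (K : Type*) [Field K] (n : ℕ) : K →+* Fn K n :=
  (algebraMap (MvPolynomial (Fin n) K) (Fn K n)).comp MvPolynomial.C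

/-- The variables `x₁,…,x_n` as elements of `K(x₁,…,x_n)`. -/
def xv (K : Type*) [Field K] (n : ℕ) (i : Fin n) : Fn K n :=
  algebraMap (MvPolynomial (Fin n) K) (Fn K n) (MvPolynomial.X i)

/-- The `j × (j+1)` matrix `H^{(j)}` with entries `(H^{(j)})_{i,c} = h^{(c)}_{1-i}`
(rows 0-indexed here, so row `i` holds `h^{(c)}_{-i}`). -/
def Hmat (a b : ℤ → K) (c : K →+* L) {mv : ℕ} (y : Fin mv → L) (j : ℕ) :
    Matrix (Fin j) (Fin (j + 1)) L :=
  Matrix.of fun i cc => genhr a b c y (cc : ℕ) (-(i : ℤ))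

/-- `Δ_{m+1}^{(j)}` (0-indexed in `m`): `(-1)^m` times the determinant of `H^{(j)}`
with its `(m+1)`-st column removed; `0` when `m + 1 > j + 1`. -/
def DeltaMinor (a b : ℤ → K) (c : K →+* L) {mv : ℕ} (y : Fin mv → L) (j m : ℕ) : L :=
  if hm : m < j + 1 then
    (-1) ^ m * Matrix.det (Matrix.of fun i cc : Fin j =>
      Hmat a b c y j i (Fin.succAbove ⟨m, hm⟩ cc))
  else 0

/-- The polynomial `φ_i` is monic of degree `i`. -/
theorem phi_monic_natDegree (a b : ℤ → K) (i : ℕ) :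
    (phi a b i).Monic ∧ (phi a b i).natDegree = i := by
  induction i using Nat.twoStepInduction with
  | zero => simp [phi]
  | one => exact ⟨monic_X_sub_C _, natDegree_X_sub_C _⟩
  | more i ih₀ ih₁ =>
    have hmonic := (monic_X_sub_C (a (i + 1))).mul ih₁.1
    have hdeg : ((X - C (a (i + 1))) * phi a b (i + 1)).natDegree = i + 2 := by
      rw [(monic_X_sub_C _).natDegree_mul ih₁.1, natDegree_X_sub_C, ih₁.2]
      omega
    have hlt : (C (b (i + 1)) * phi a b i).natDegree <
        ((X - C (a (i + 1))) * phi a b (i + 1)).natDegree := by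
      have := natDegree_C_mul_le (b (i + 1)) (phi a b i)
      omega
    rw [phi]
    exact ⟨hmonic.sub_of_left (degree_lt_degree hlt),
      (natDegree_sub_eq_left_of_natDegree_lt hlt).trans hdeg⟩

/-- A product over pairs `i < j` is unchanged by reversing the order of `Fin m` in both
indices. -/
theorem Fin.prod_prod_Ioi_rev {M : Type*} [CommMonoid M] {m : ℕ} (f : Fin m → Fin m → M) :
    ∏ i : Fin m, ∏ j ∈ Finset.Ioi i, f j.rev i.rev =
      ∏ i : Fin m, ∏ j ∈ Finset.Ioi i, f i j := by
  rw [Finset.prod_comm' (t' := Finset.univ) (s' := fun j => Finset.Iio j) (by simp)]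
  refine Fintype.prod_equiv Fin.revPerm _ _ fun j => ?_
  rw [Fin.revPerm_apply, ← Fin.map_revPerm_Iio, Finset.prod_map]
  rfl

/-- The generalized Schur polynomial of the empty partition is `1`. -/
theorem genS_zero (a b : ℤ → K) (c : K →+* L) {m : ℕ} {y : Fin m → L}
    (hy : Function.Injective y) : genS a b c y (fun _ => 0) = 1 := by
  have hden : ∏ i : Fin m, ∏ j ∈ Finset.Ioi i, (y i - y j) ≠ 0 :=
    Finset.prod_ne_zero_iff.2 fun i _ => Finset.prod_ne_zero_iff.2 fun j hj =>
      sub_ne_zero.2 (hy.ne (Finset.mem_Ioi.1 hj).ne)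
  rw [genS, div_eq_one_iff_eq hden, ← Matrix.det_submatrix_equiv_self Fin.revPerm,
    ← Fin.prod_prod_Ioi_rev, ← Matrix.det_vandermonde (fun i => y i.rev),
    Matrix.det_eval_matrixOfPolynomials_eq_det_vandermonde _
      (fun j : Fin m => (phi a b j).map c)
      (fun j => by rw [natDegree_map, (phi_monic_natDegree a b j).2])
      (fun j => (phi_monic_natDegree a b j).1.map c)]
  congr 1
  ext i j
  have hj : m - 1 - (m - ((j : ℕ) + 1)) = j := by omega
  simp [hj, eval_map]

theorem genh_zero (a b : ℤ → K) (c : K →+* L) {m : ℕ} {y : Fin m → L}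
    (hy : Function.Injective y) : genh a b c y 0 = 1 := by
  simp [genh, genS_zero a b c hy]

theorem genhr_eq_zero (a b : ℤ → K) (c : K →+* L) {m : ℕ} (y : Fin m → L) (r : ℕ) {i : ℤ}
    (hi : i + r < 0) : genhr a b c y r i = 0 := by
  induction r generalizing i with
  | zero => simp_all [genhr, genh]
  | succ r ih =>
    push_cast at hi
    rw [genhr, ih (by omega), ih (by omega), ih (by omega)]
    simp

theorem genhr_neg_self (a b : ℤ → K) (c : K →+* L) {m : ℕ} {y : Fin m → L}
    (hy : Function.Injective y) (r : ℕ) : genhr a b c y r (-r) = 1 := by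
  induction r with
  | zero => simpa [genhr] using genh_zero a b c hy
  | succ r ih =>
    have hr : (-((r + 1 : ℕ) : ℤ)) + 1 = -r := by
      push_cast
      ring
    rw [genhr, hr, ih, genhr_eq_zero a b c y r (by omega), genhr_eq_zero a b c y r (by omega)]
    simp

theorem DeltaMinor_self (a b : ℤ → K) (c : K →+* L) {m : ℕ} {y : Fin m → L}
    (hy : Function.Injective y) (j : ℕ) : DeltaMinor a b c y j j = (-1) ^ j := by
  have hlast : (⟨j, j.lt_succ_self⟩ : Fin (j + 1)) = Fin.last j := rfl
  rw [DeltaMinor, dif_pos j.lt_succ_self, hlast, Matrix.det_of_isUpperTriangular]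
  · simp [Hmat, genhr_neg_self a b c hy]
  · intro i k hik
    have hlt : (k : ℕ) < i := hik
    simpa [Hmat] using genhr_eq_zero a b c y k (i := -(i : ℤ)) (by omega)

theorem DeltaMinor_eq_zero (a b : ℤ → K) (c : K →+* L) {m : ℕ} (y : Fin m → L) {j i : ℕ}
    (h : j < i) : DeltaMinor a b c y j i = 0 :=
  dif_neg (by omega)

theorem Fin.sign_revPerm (l : ℕ) :
    Equiv.Perm.sign (Fin.revPerm : Equiv.Perm (Fin l)) = ∏ j : Fin l, (-1) ^ (j : ℕ) := by
  rw [Equiv.Perm.sign_eq_prod_prod_Iio]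
  refine Finset.prod_congr rfl fun j _ => ?_
  rw [Finset.prod_congr rfl fun i hi =>
    if_neg (by simpa using (Finset.mem_Iio.1 hi).le), Finset.prod_const, Fin.card_Iio]

/-- A matrix vanishing below its anti-diagonal, with alternating anti-diagonal entries
`1, -1, 1, …`, has determinant `1`. -/
theorem Matrix.det_eq_one_of_antitriangular {R : Type*} [CommRing R] {l : ℕ}
    {B : Matrix (Fin l) (Fin l) R} (hzero : ∀ i j : Fin l, j < i → B i j.rev = 0)
    (hanti : ∀ i : Fin l, B i i.rev = (-1) ^ (i : ℕ)) : B.det = 1 := by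
  have htri : (B.submatrix id Fin.revPerm).det = ∏ i : Fin l, (-1) ^ (i : ℕ) := by
    refine (Matrix.det_of_isUpperTriangular fun i j hij => hzero i j hij).trans ?_
    exact Finset.prod_congr rfl fun i _ => hanti i
  have hsign : ((Equiv.Perm.sign (Fin.revPerm : Equiv.Perm (Fin l)) : ℤ) : R) =
      ∏ i : Fin l, (-1) ^ (i : ℕ) := by
    rw [Fin.sign_revPerm]
    push_cast
    rfl
  have hsq : (∏ i : Fin l, (-1 : R) ^ (i : ℕ)) * ∏ i : Fin l, (-1 : R) ^ (i : ℕ) = 1 := by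
    rw [← Finset.prod_mul_distrib]
    exact Finset.prod_eq_one fun i _ => by rw [← mul_pow]; simp
  rw [Matrix.det_permute', hsign] at htri
  calc B.det = (∏ i : Fin l, (-1 : R) ^ (i : ℕ)) *
        ((∏ i : Fin l, (-1 : R) ^ (i : ℕ)) * B.det) := by rw [← mul_assoc, hsq, one_mul]
    _ = 1 := by rw [htri, hsq]

theorem xv_injective (K : Type*) [Field K] (n : ℕ) : Function.Injective (xv K n) :=
  (IsFractionRing.injective (MvPolynomial (Fin n) K) (Fn K n)).comp MvPolynomial.X_injective

/-- `Δ_k^{(k-1)} = (-1)^{k-1}` for `k ≥ 1`; consequently for each `l ≥ 1` the `l×l` matrix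
`B` with `B_{ij} = Δ_i^{(l-j)}` is anti-triangular with anti-diagonal entries `(-1)^{k-1}`
and `det B = 1`. (All indices 0-based in the formalization.) -/
theorem DeltaMinor_antitriangular (K : Type*) [Field K] (a b : ℤ → K) (n : ℕ) (hn : 1 ≤ n) :
    (∀ k : ℕ, 1 ≤ k →
      DeltaMinor a b (cK K n) (xv K n) (k - 1) (k - 1) = (-1) ^ (k - 1)) ∧
    ∀ l : ℕ, 1 ≤ l →
      (∀ i j : Fin l, l + 1 < ((i : ℕ) + 1) + ((j : ℕ) + 1) →
        DeltaMinor a b (cK K n) (xv K n) (l - 1 - (j : ℕ)) (i : ℕ) = 0) ∧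
      (∀ k : Fin l,
        DeltaMinor a b (cK K n) (xv K n) (l - 1 - (l - 1 - (k : ℕ))) (k : ℕ)
          = (-1) ^ (k : ℕ)) ∧
      Matrix.det (Matrix.of fun i j : Fin l =>
        DeltaMinor a b (cK K n) (xv K n) (l - 1 - (j : ℕ)) (i : ℕ)) = 1 := by
  have hself := DeltaMinor_self a b (cK K n) (xv_injective K n)
  have hrev : ∀ {l : ℕ} (k : Fin l), l - 1 - (k.rev : ℕ) = k := fun k => by
    rw [Fin.val_rev]
    omega
  refine ⟨fun k _ => hself (k - 1), fun l _ => ⟨fun i j hij => ?_, fun k => ?_, ?_⟩⟩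
  · exact DeltaMinor_eq_zero a b _ _ (by omega)
  · rw [show l - 1 - (l - 1 - (k : ℕ)) = k by omega, hself]
  · refine Matrix.det_eq_one_of_antitriangular (fun i j hij => ?_) fun i => ?_
    · rw [Matrix.of_apply, hrev]
      exact DeltaMinor_eq_zero a b _ _ hij
    · rw [Matrix.of_apply, hrev, hself]
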